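/- Let J(x) = x·tanh x, J'(ξ) = tanh ξ + ξ(1 − tanh²ξ), Λ(ξ) = J'(ξ)² − 4J(ξ), and for ξ ≠ 0, η ≠ 0, ξ+η ≠ 0 set ζ = −(ξ+η), Ω = J(ξ)² + J(η)² + J(ζ)² − 2J(ξ)J(η) − 2J(η)J(ζ) − 2J(ζ)J(ξ) and A^h(ξ,η) = 2iη·J(ξ)·(J(ζ) − J(ξ) + J(η))/Ω. Then: (a) for every fixed real ξ ≠ 0, as η → 0 through values with η ≠ 0 and ξ + η ≠ 0, A^h(ξ,η) → 2i·J(ξ)·J'(ξ)/Λ(ξ); and (b) for every fixed real η ≠ 0, as ξ → 0 through values with ξ ≠ 0 and ξ + η ≠ 0, A^h(ξ,η) → 4iη·J(η)/Λ(η). -/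

import Mathlib

open Filter Topology

noncomputable def J (x : ℝ) : ℝ := x * Real.tanh x

noncomputable def J' (ξ : ℝ) : ℝ := Real.tanh ξ + ξ * (1 - Real.tanh ξ ^ 2)

noncomputable def Λ (ξ : ℝ) : ℝ := J' ξ ^ 2 - 4 * J ξ

noncomputable def Ω (ξ η ζ : ℝ) : ℝ :=
  J ξ ^ 2 + J η ^ 2 + J ζ ^ 2 - 2 * J ξ * J η - 2 * J η * J ζ - 2 * J ζ * J ξ

noncomputable def Ah (ξ η : ℝ) : ℂ :=
  2 * Complex.I * (η : ℂ) * (J ξ : ℂ) * ((J (-(ξ + η)) - J ξ + J η : ℝ) : ℂ) /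
    ((Ω ξ η (-(ξ + η)) : ℝ) : ℂ)

/-!
Since `J` is even and `J h ~ h²` at `0`, the expression
`Ω = (J ζ - J ξ)² - J η (2 (J ξ + J ζ) - J η)` vanishes to second order as `η → 0`, with
`Ω / η² → J'(ξ)² - 4 J(ξ) = Λ(ξ)`. On `η = 0` the numerator `η (J ζ - J ξ + J η)` divided by `η²`
is a difference quotient of `J`; on `ξ = 0` (where `Ω` behaves in the same way by symmetry) the
factor `J ξ` supplies the two powers. That `Λ < 0` away from `0` follows, for `x > 0`, from
multiplying `J' x < 2 x` by `J' x < 2 tanh x`; both differences have an explicitly positive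
derivative.
-/

lemma hasDerivAt_tanh (x : ℝ) : HasDerivAt Real.tanh (1 - Real.tanh x ^ 2) x := by
  have hcosh : Real.cosh x ≠ 0 := (Real.cosh_pos x).ne'
  have hquot := (Real.hasDerivAt_sinh x).fun_div (Real.hasDerivAt_cosh x) hcosh
  simp only [← Real.tanh_eq_sinh_div_cosh] at hquot
  refine hquot.congr_deriv ?_
  rw [Real.tanh_eq_sinh_div_cosh]
  field_simp

lemma tanh_pos {x : ℝ} (hx : 0 < x) : 0 < Real.tanh x := by
  rw [Real.tanh_eq_sinh_div_cosh]
  exact div_pos (Real.sinh_pos_iff.2 hx) (Real.cosh_pos x)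

lemma tendsto_tanh_div_self : Tendsto (fun t : ℝ => Real.tanh t / t) (𝓝[≠] 0) (𝓝 1) := by
  simpa [div_eq_inv_mul] using (hasDerivAt_tanh 0).tendsto_slope_zero

lemma J_neg (x : ℝ) : J (-x) = J x := by
  simp [J]

lemma hasDerivAt_J (x : ℝ) : HasDerivAt J (J' x) x :=
  ((hasDerivAt_id x).mul (hasDerivAt_tanh x)).congr_deriv (by simp [J'])

lemma continuous_J : Continuous J :=
  continuous_iff_continuousAt.2 fun x => (hasDerivAt_J x).continuousAt

lemma tendsto_J_zero : Tendsto J (𝓝[≠] 0) (𝓝 0) :=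
  (continuous_J.tendsto' 0 0 (by simp [J])).mono_left nhdsWithin_le_nhds

lemma tendsto_J_add (x : ℝ) : Tendsto (fun h => J (x + h)) (𝓝[≠] 0) (𝓝 (J x)) :=
  ((continuous_J.comp (continuous_const_add x)).tendsto' 0 (J x) (by simp)).mono_left
    nhdsWithin_le_nhds

lemma tendsto_J_slope (x : ℝ) :
    Tendsto (fun h => (J (x + h) - J x) / h) (𝓝[≠] 0) (𝓝 (J' x)) := by
  simpa only [smul_eq_mul, div_eq_inv_mul] using (hasDerivAt_J x).tendsto_slope_zero

lemma tendsto_J_div_self : Tendsto (fun h => J h / h) (𝓝[≠] 0) (𝓝 0) := by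
  simpa [J, J'] using tendsto_J_slope 0

lemma tendsto_J_div_sq : Tendsto (fun h => J h / h ^ 2) (𝓝[≠] 0) (𝓝 1) := by
  refine tendsto_tanh_div_self.congr' ?_
  filter_upwards [self_mem_nhdsWithin] with h (hh : h ≠ 0)
  rw [J]
  field_simp

lemma hasDerivAt_J' (x : ℝ) :
    HasDerivAt J' (2 * (1 - Real.tanh x ^ 2) * (1 - x * Real.tanh x)) x := by
  have htanh := hasDerivAt_tanh x
  refine (htanh.add ((hasDerivAt_id x).mul ((htanh.pow 2).const_sub 1))).congr_deriv ?_
  simp only [id, Pi.pow_apply]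
  ring

lemma pos_of_hasDerivAt_pos {f f' : ℝ → ℝ} {a x : ℝ} (hf : ∀ y, a ≤ y → HasDerivAt f (f' y) y)
    (hf' : ∀ y, a < y → 0 < f' y) (ha : f a = 0) (hx : a < x) : 0 < f x := by
  have hmono : StrictMonoOn f (Set.Ici a) := by
    refine strictMonoOn_of_hasDerivWithinAt_pos (f' := f') (convex_Ici a)
      (fun y hy => (hf y hy).continuousAt.continuousWithinAt) ?_ ?_ <;> rw [interior_Ici]
    · exact fun y hy => (hf y (le_of_lt hy)).hasDerivWithinAt
    · exact hf'
  exact ha ▸ hmono Set.self_mem_Ici hx.le hx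

lemma J'_pos {x : ℝ} (hx : 0 < x) : 0 < J' x :=
  add_pos (tanh_pos hx) (mul_pos hx (sub_pos.2 (Real.tanh_sq_lt_one x)))

lemma J'_lt_two_mul_self {x : ℝ} (hx : 0 < x) : J' x < 2 * x := by
  refine sub_pos.1 (pos_of_hasDerivAt_pos (f := fun y => 2 * y - J' y)
    (f' := fun y => 2 * (Real.tanh y ^ 2 + y * Real.tanh y * (1 - Real.tanh y ^ 2)))
    (fun y _ => ?_) (fun y hy => ?_) (by simp [J']) hx)
  · exact (((hasDerivAt_id y).const_mul 2).sub (hasDerivAt_J' y)).congr_deriv (by ring)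
  · have htanh := tanh_pos hy
    have hsech := sub_pos.2 (Real.tanh_sq_lt_one y)
    positivity

lemma J'_lt_two_mul_tanh {x : ℝ} (hx : 0 < x) : J' x < 2 * Real.tanh x := by
  refine sub_pos.1 (pos_of_hasDerivAt_pos (f := fun y => 2 * Real.tanh y - J' y)
    (f' := fun y => 2 * (y * Real.tanh y * (1 - Real.tanh y ^ 2)))
    (fun y _ => ?_) (fun y hy => ?_) (by simp [J']) hx)
  · exact (((hasDerivAt_tanh y).const_mul 2).sub (hasDerivAt_J' y)).congr_deriv (by ring)
  · have htanh := tanh_pos hy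
    have hsech := sub_pos.2 (Real.tanh_sq_lt_one y)
    positivity

lemma Λ_neg (x : ℝ) : Λ (-x) = Λ x := by
  simp only [Λ, J_neg, J', Real.tanh_neg]
  ring

lemma Λ_lt_zero_of_pos {x : ℝ} (hx : 0 < x) : Λ x < 0 := by
  refine sub_neg.2 ?_
  calc J' x ^ 2 = J' x * J' x := sq _
    _ < 2 * x * (2 * Real.tanh x) :=
      mul_lt_mul'' (J'_lt_two_mul_self hx) (J'_lt_two_mul_tanh hx) (J'_pos hx).le (J'_pos hx).le
    _ = 4 * J x := by rw [J]; ring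

lemma Λ_lt_zero {x : ℝ} (hx : x ≠ 0) : Λ x < 0 := by
  rcases hx.lt_or_gt with hneg | hpos
  · exact Λ_neg x ▸ Λ_lt_zero_of_pos (neg_pos.2 hneg)
  · exact Λ_lt_zero_of_pos hpos

lemma Ω_swap (ξ η ζ : ℝ) : Ω ξ η ζ = Ω η ξ ζ := by
  unfold Ω
  ring

lemma Ω_eq_sq_sub (ξ η ζ : ℝ) :
    Ω ξ η ζ = (J ζ - J ξ) ^ 2 - J η * (2 * (J ξ + J ζ) - J η) := by
  unfold Ω
  ring

lemma tendsto_Ω_div_sq (x : ℝ) :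
    Tendsto (fun h => Ω x h (-(x + h)) / h ^ 2) (𝓝[≠] 0) (𝓝 (Λ x)) := by
  have hlim := ((tendsto_J_slope x).pow 2).sub (tendsto_J_div_sq.mul
    ((((tendsto_J_add x).const_add (J x)).const_mul 2).sub tendsto_J_zero))
  have hΛ : J' x ^ 2 - 1 * (2 * (J x + J x) - 0) = Λ x := by
    rw [Λ]
    ring
  rw [hΛ] at hlim
  refine hlim.congr fun h => ?_
  rw [Ω_eq_sq_sub, J_neg]
  ring

/-- The real amplitude of the symbol: `A^h = 2 i · AhAmplitude`. The argument `ζ = -(ξ + η)` of `J`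
in the numerator is replaced by `ξ + η`, as `J` is even. -/
noncomputable def AhAmplitude (ξ η : ℝ) : ℝ :=
  η * J ξ * (J (ξ + η) - J ξ + J η) / Ω ξ η (-(ξ + η))

lemma Ah_eq_two_I_mul_AhAmplitude (ξ η : ℝ) :
    Ah ξ η = 2 * Complex.I * (AhAmplitude ξ η : ℂ) := by
  rw [Ah, AhAmplitude, J_neg]
  push_cast
  ring

lemma tendsto_AhAmplitude_right {ξ : ℝ} (hξ : ξ ≠ 0) :
    Tendsto (fun η => AhAmplitude ξ η) (𝓝[≠] 0) (𝓝 (J ξ * J' ξ / Λ ξ)) := by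
  have hlim := (((tendsto_J_slope ξ).add tendsto_J_div_self).const_mul (J ξ)).div
    (tendsto_Ω_div_sq ξ) (Λ_lt_zero hξ).ne
  rw [add_zero] at hlim
  refine hlim.congr' ?_
  filter_upwards [self_mem_nhdsWithin] with η (hη : η ≠ 0)
  rw [AhAmplitude, Pi.div_apply, ← add_div, div_div_eq_mul_div]
  congr 1
  field_simp

lemma tendsto_AhAmplitude_left {η : ℝ} (hη : η ≠ 0) :
    Tendsto (fun ξ => AhAmplitude ξ η) (𝓝[≠] 0) (𝓝 (η * (2 * J η) / Λ η)) := by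
  have hlim := ((tendsto_J_div_sq.const_mul η).mul
    (((tendsto_J_add η).sub tendsto_J_zero).add_const (J η))).div
    (tendsto_Ω_div_sq η) (Λ_lt_zero hη).ne
  rw [mul_one, sub_zero, ← two_mul] at hlim
  refine hlim.congr' ?_
  filter_upwards [self_mem_nhdsWithin] with ξ (hξ : ξ ≠ 0)
  rw [AhAmplitude, Pi.div_apply, Ω_swap ξ, add_comm ξ η, div_div_eq_mul_div]
  congr 1
  field_simp

lemma tendsto_Ah_of_tendsto_AhAmplitude {α : Type*} {l : Filter α} {u v : α → ℝ} {c : ℝ}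
    (h : Tendsto (fun t => AhAmplitude (u t) (v t)) l (𝓝 c)) :
    Tendsto (fun t => Ah (u t) (v t)) l (𝓝 (2 * Complex.I * (c : ℂ))) := by
  simpa only [Ah_eq_two_I_mul_AhAmplitude] using h.ofReal.const_mul (2 * Complex.I)

/-- Boundary values of the holomorphic normal-form symbol `A^h` on the lines
`η = 0` and `ξ = 0`. -/
theorem Ah_limits :
    (∀ ξ : ℝ, ξ ≠ 0 →
      Tendsto (fun η : ℝ => Ah ξ η) (𝓝[{η : ℝ | η ≠ 0 ∧ ξ + η ≠ 0}] (0 : ℝ))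
        (𝓝 (2 * Complex.I * (J ξ : ℂ) * (J' ξ : ℂ) / ((Λ ξ : ℝ) : ℂ)))) ∧
    (∀ η : ℝ, η ≠ 0 →
      Tendsto (fun ξ : ℝ => Ah ξ η) (𝓝[{ξ : ℝ | ξ ≠ 0 ∧ ξ + η ≠ 0}] (0 : ℝ))
        (𝓝 (4 * Complex.I * (η : ℂ) * (J η : ℂ) / ((Λ η : ℝ) : ℂ)))) := by
  refine ⟨fun ξ hξ => ?_, fun η hη => ?_⟩ <;>
    refine Tendsto.mono_left ?_ (nhdsWithin_mono (t := {0}ᶜ) 0 fun _ => And.left)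
  · convert tendsto_Ah_of_tendsto_AhAmplitude (tendsto_AhAmplitude_right hξ) using 2
    push_cast
    ring
  · convert tendsto_Ah_of_tendsto_AhAmplitude (tendsto_AhAmplitude_left hη) using 2
    push_cast
    ring
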